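/- arXiv:2511.20932 — 4 statements merged into one kernel-verified Lean document; each statement's English description precedes it below -/
import Mathlib

section
/- For every k with 0 ≤ k ≤ m·n, the probability that Bingo is achieved within the first k calls satisfies the inclusion–exclusion formula P(B ≤ k) = Σ_{∅ ≠ X ⊆ 𝓛} (−1)^{|X|+1} · C(k, m(X)) / C(m·n, m(X)), where C(a,b) denotes the binomial coefficient. -/
open Finset

/-- The row of an `n × n` Bingo board through index `i`. -/
def bingoRow (n : ℕ) (i : Fin n) : Finset (Fin n × Fin n) :=
  Finset.univ.filter (fun s => s.1 = i)

/-- The column of an `n × n` Bingo board through index `j`. -/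
def bingoCol (n : ℕ) (j : Fin n) : Finset (Fin n × Fin n) :=
  Finset.univ.filter (fun s => s.2 = j)

/-- The main diagonal `{(i,i)}`. -/
def bingoDiag (n : ℕ) : Finset (Fin n × Fin n) :=
  Finset.univ.filter (fun s => (s.2 : ℕ) = (s.1 : ℕ))

/-- The anti-diagonal `{(i, n-1-i)}`. -/
def bingoAntiDiag (n : ℕ) : Finset (Fin n × Fin n) :=
  Finset.univ.filter (fun s => (s.2 : ℕ) = n - 1 - (s.1 : ℕ))

/-- The set `𝓛` of winning lines: `n` rows, `n` columns and the two diagonals. -/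
def bingoLines (n : ℕ) : Finset (Finset (Fin n × Fin n)) :=
  (Finset.univ.image (bingoRow n)) ∪ (Finset.univ.image (bingoCol n)) ∪
    {bingoDiag n, bingoAntiDiag n}

/-- An `(n,m)`-Bingo card: an injective assignment of numbers such that column `j`
only uses numbers in `[m*j, m*(j+1))`. -/
def IsBingoCard (n m : ℕ) (c : Fin n × Fin n → Fin (m * n)) : Prop :=
  Function.Injective c ∧
    ∀ i j : Fin n, m * (j : ℕ) ≤ (c (i, j) : ℕ) ∧ (c (i, j) : ℕ) < m * ((j : ℕ) + 1)

/-- Bingo is achieved within the first `k` calls of `σ`: some winning line has all of its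
numbers among `σ 0, …, σ (k-1)`. -/
def BingoWins (n m : ℕ) (c : Fin n × Fin n → Fin (m * n))
    (σ : Equiv.Perm (Fin (m * n))) (k : ℕ) : Prop :=
  ∃ L ∈ bingoLines n, ∀ s ∈ L, ∃ t : Fin (m * n), (t : ℕ) < k ∧ σ t = c s

/-- `S_n = ∑_{∅ ≠ X ⊆ 𝓛} (-1)^{|X|+1} / (m(X)+1)`, where `m(X)` is the number of squares
covered by the union of the lines in `X`. -/
noncomputable def Sn (n : ℕ) : ℝ :=
  ∑ X ∈ (bingoLines n).powerset.filter (fun X => X.Nonempty),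
    (-1 : ℝ) ^ (X.card + 1) / (((X.sup id).card : ℝ) + 1)

theorem bingo_aux_mono {α : Type*} [Fintype α] [DecidableEq α] (K A A' : Finset α)
    (h : A.card = A'.card) :
    (univ.filter (fun σ : Equiv.Perm α => A ⊆ K.map σ.toEmbedding)).card ≤
    (univ.filter (fun σ : Equiv.Perm α => A' ⊆ K.map σ.toEmbedding)).card := by
  classical
  let e : {x // x ∈ A} ≃ {x // x ∈ A'} := Finset.equivOfCardEq h
  let π : Equiv.Perm α := e.extendSubtype
  have hπ : ∀ y ∈ A', ∃ x ∈ A, π x = y := by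
    intro y hy
    refine ⟨(e.symm ⟨y, hy⟩).1, (e.symm ⟨y, hy⟩).2, ?_⟩
    rw [Equiv.extendSubtype_apply_of_mem e _ (e.symm ⟨y, hy⟩).2]
    simp
  apply Finset.card_le_card_of_injOn (fun σ => σ.trans π)
  · intro σ hσ
    simp only [coe_filter, mem_univ, true_and, Set.mem_ofPred_eq] at hσ ⊢
    intro y hy
    obtain ⟨x, hx, rfl⟩ := hπ y hy
    obtain ⟨z, hz, hzx⟩ := Finset.mem_map.1 (hσ hx)
    refine Finset.mem_map.2 ⟨z, hz, ?_⟩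
    simp at hzx
    simp [hzx]
  · intro σ _ τ _ hst
    ext x
    have := Equiv.congr_fun hst x
    simpa using this

theorem bingo_aux_count {α : Type*} [Fintype α] [DecidableEq α] (K A : Finset α) :
    (univ.filter (fun σ : Equiv.Perm α => A ⊆ K.map σ.toEmbedding)).card *
      (Fintype.card α).choose A.card = (Fintype.card α).factorial * K.card.choose A.card := by
  classical
  have h1 : ∑ A' ∈ powersetCard A.card (univ : Finset α),
      (univ.filter (fun σ : Equiv.Perm α => A' ⊆ K.map σ.toEmbedding)).card =
      ∑ σ : Equiv.Perm α, ((powersetCard A.card (univ : Finset α)).filter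
        (fun A' => A' ⊆ K.map σ.toEmbedding)).card := by
    simp only [Finset.card_filter]
    exact Finset.sum_comm
  have h2 : ∀ A' ∈ powersetCard A.card (univ : Finset α),
      (univ.filter (fun σ : Equiv.Perm α => A' ⊆ K.map σ.toEmbedding)).card =
      (univ.filter (fun σ : Equiv.Perm α => A ⊆ K.map σ.toEmbedding)).card := by
    intro A' hA'
    have := (mem_powersetCard.1 hA').2
    exact le_antisymm (bingo_aux_mono K A' A this) (bingo_aux_mono K A A' this.symm)
  have h3 : ∀ σ : Equiv.Perm α, ((powersetCard A.card (univ : Finset α)).filter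
        (fun A' => A' ⊆ K.map σ.toEmbedding)).card = K.card.choose A.card := by
    intro σ
    rw [← Finset.card_map σ.toEmbedding (s := K), ← card_powersetCard]
    congr 1
    ext B
    simp only [mem_filter, mem_powersetCard, subset_univ, true_and]
    tauto
  rw [Finset.sum_congr rfl h2, Finset.sum_congr rfl (fun σ _ => h3 σ)] at h1
  simp only [sum_const, card_powersetCard, smul_eq_mul, card_univ, Fintype.card_perm] at h1
  rw [mul_comm, h1]

theorem bingoLines_nonempty {n : ℕ} (hn : 1 ≤ n) {L : Finset (Fin n × Fin n)}
    (hL : L ∈ bingoLines n) : L.Nonempty := by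
  simp only [bingoLines, mem_union, mem_image, mem_univ, true_and, mem_insert,
    mem_singleton] at hL
  rcases hL with (⟨i, rfl⟩ | ⟨i, rfl⟩) | rfl | rfl
  · exact ⟨(i, i), by simp [bingoRow]⟩
  · exact ⟨(i, i), by simp [bingoCol]⟩
  · exact ⟨(⟨0, hn⟩, ⟨0, hn⟩), by simp [bingoDiag]⟩
  · exact ⟨(⟨0, hn⟩, ⟨n - 1, by omega⟩), by simp [bingoAntiDiag]⟩

/-- inclusion-exclusion formula for the CDF `P(B ≤ k)` of the number of
calls needed to achieve Bingo on a single `(n,m)`-Bingo card. -/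
theorem bingo_cdf (n m : ℕ) (hn : 1 ≤ n) (hm : n ≤ m)
    (c : Fin n × Fin n → Fin (m * n)) (hc : IsBingoCard n m c)
    (B : Equiv.Perm (Fin (m * n)) → ℕ)
    (hB : ∀ σ, IsLeast {k : ℕ | 1 ≤ k ∧ BingoWins n m c σ k} (B σ))
    (k : ℕ) (hk : k ≤ m * n) :
    (((Finset.univ : Finset (Equiv.Perm (Fin (m * n)))).filter
        (fun σ => B σ ≤ k)).card : ℝ) / (Nat.factorial (m * n)) =
      ∑ X ∈ (bingoLines n).powerset.filter (fun X => X.Nonempty),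
        (-1 : ℝ) ^ (X.card + 1) *
          (Nat.choose k ((X.sup id).card) : ℝ) / (Nat.choose (m * n) ((X.sup id).card) : ℝ) := by
  classical
  let K : Finset (Fin (m * n)) := univ.filter (fun t => (t : ℕ) < k)
  have hK : K.card = k := by
    simp only [K]
    rw [Fin.card_filter_val_lt]
    exact min_eq_right hk
  let S : Finset (Fin n × Fin n) → Finset (Equiv.Perm (Fin (m * n))) := fun L =>
    univ.filter (fun σ => L.image c ⊆ K.map σ.toEmbedding)
  have hmem : ∀ L σ, σ ∈ S L ↔ ∀ s ∈ L, ∃ t : Fin (m * n), (t : ℕ) < k ∧ σ t = c s := by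
    intro L σ
    simp only [S, K, mem_filter, mem_univ, true_and, Finset.image_subset_iff, mem_map,
      Equiv.coe_toEmbedding]
  have hset : (univ : Finset (Equiv.Perm (Fin (m * n)))).filter (fun σ => B σ ≤ k) =
      (bingoLines n).biUnion S := by
    ext σ
    simp only [mem_filter, mem_univ, true_and, mem_biUnion, hmem]
    obtain ⟨⟨h1, L, hL, h2⟩, h3⟩ := hB σ
    constructor
    · intro h
      refine ⟨L, hL, fun s hs => ?_⟩
      obtain ⟨t, ht, e⟩ := h2 s hs
      exact ⟨t, lt_of_lt_of_le ht h, e⟩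
    · intro ⟨L', hL', h⟩
      apply h3
      refine ⟨?_, L', hL', h⟩
      obtain ⟨s, hs⟩ := bingoLines_nonempty hn hL'
      obtain ⟨t, ht, -⟩ := h s hs
      omega
  have key := Finset.inclusion_exclusion_card_biUnion (bingoLines n) S
  have hinf : ∀ (X : Finset (Finset (Fin n × Fin n))) (hX : X.Nonempty),
      X.inf' hX S = S (X.sup id) := by
    intro X hX
    ext σ
    rw [Finset.mem_inf']
    simp only [hmem, Finset.mem_sup, id]
    exact ⟨fun h s ⟨i, hi, hs⟩ => h i hi s hs, fun h i hi s hs => h s ⟨i, hi, hs⟩⟩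
  have hcount : ∀ U : Finset (Fin n × Fin n), ((S U).card : ℝ) / (Nat.factorial (m * n)) =
      (Nat.choose k U.card : ℝ) / (Nat.choose (m * n) U.card : ℝ) := by
    intro U
    have h := bingo_aux_count K (U.image c)
    have hU : (U.image c).card = U.card := Finset.card_image_of_injective _ hc.1
    have hle : U.card ≤ m * n := by
      rw [← hU]
      simpa using Finset.card_le_univ (U.image c)
    rw [hK, hU, Fintype.card_fin] at h
    have h' : ((S U).card : ℝ) * (Nat.choose (m * n) U.card : ℝ) =
        (Nat.factorial (m * n) : ℝ) * (Nat.choose k U.card : ℝ) := by exact_mod_cast h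
    have h1 : (Nat.factorial (m * n) : ℝ) ≠ 0 := by exact_mod_cast Nat.factorial_ne_zero _
    have h2 : (Nat.choose (m * n) U.card : ℝ) ≠ 0 := by
      exact_mod_cast (Nat.choose_pos hle).ne'
    rw [div_eq_div_iff h1 h2, h', mul_comm]
  have key2 : (((bingoLines n).biUnion S).card : ℤ) =
      ∑ X ∈ (bingoLines n).powerset.filter (fun X => X.Nonempty),
        (-1 : ℤ) ^ (X.card + 1) * ((S (X.sup id)).card : ℤ) := by
    rw [key, ← Finset.sum_coe_sort ((bingoLines n).powerset.filter (fun X => X.Nonempty))]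
    refine Finset.sum_congr rfl fun X _ => ?_
    rw [hinf]
  have key' : (((bingoLines n).biUnion S).card : ℝ) =
      ∑ X ∈ (bingoLines n).powerset.filter (fun X => X.Nonempty),
        (-1 : ℝ) ^ (X.card + 1) * ((S (X.sup id)).card : ℝ) := by
    exact_mod_cast congrArg (Int.cast : ℤ → ℝ) key2
  rw [hset, key', Finset.sum_div]
  refine Finset.sum_congr rfl fun X _ => ?_
  rw [mul_div_assoc, hcount, mul_div_assoc]
end

section
/- For every k with 1 ≤ k ≤ m·n, the probability that Bingo is achieved exactly at the k-th call satisfies P(B = k) = Σ_{∅ ≠ X ⊆ 𝓛} (−1)^{|X|+1} · C(k−1, m(X)−1) / C(m·n, m(X)), where C(a,b) denotes the binomial coefficient. -/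
open Finset

open Classical in
lemma aux_sym {α : Type*} [Fintype α] [DecidableEq α] (S T T' : Finset α) (h : T.card = T'.card) :
    (univ.filter (fun σ : Equiv.Perm α => ∀ t ∈ T, σ t ∈ S)).card =
    (univ.filter (fun σ : Equiv.Perm α => ∀ t ∈ T', σ t ∈ S)).card := by
  let e0 : {x // x ∈ T'} ≃ {x // x ∈ T} := Finset.equivOfCardEq h.symm
  let e : Equiv.Perm α := e0.extendSubtype
  have he : ∀ t, e t ∈ T ↔ t ∈ T' := by
    intro t
    constructor
    · intro ht
      by_contra hh
      exact e0.extendSubtype_not_mem t hh ht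
    · intro ht
      exact e0.extendSubtype_mem t ht
  refine Finset.card_bij' (fun σ _ => e.trans σ) (fun σ _ => e.symm.trans σ) ?_ ?_ ?_ ?_
  · intro σ hσ
    simp only [mem_filter, mem_univ, true_and, Equiv.trans_apply] at hσ ⊢
    exact fun t ht => hσ _ ((he t).2 ht)
  · intro σ hσ
    simp only [mem_filter, mem_univ, true_and, Equiv.trans_apply] at hσ ⊢
    exact fun t ht => hσ _ ((he _).1 (by simpa using ht))
  · intro σ _
    ext x; simp
  · intro σ _
    ext x; simp

open Classical in
lemma aux_count {α : Type*} [Fintype α] [DecidableEq α] (S T : Finset α) :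
    (univ.filter (fun σ : Equiv.Perm α => ∀ t ∈ T, σ t ∈ S)).card *
      (Fintype.card α).choose T.card = (Fintype.card α).factorial * S.card.choose T.card := by
  have h1 : ∑ T' ∈ powersetCard T.card (univ : Finset α),
      (univ.filter (fun σ : Equiv.Perm α => ∀ t ∈ T', σ t ∈ S)).card =
      (Fintype.card α).choose T.card *
        (univ.filter (fun σ : Equiv.Perm α => ∀ t ∈ T, σ t ∈ S)).card := by
    rw [Finset.sum_const_nat (m := (univ.filter (fun σ : Equiv.Perm α => ∀ t ∈ T, σ t ∈ S)).card)]
    · rw [card_powersetCard, card_univ]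
    · intro T' hT'
      exact aux_sym S T' T (mem_powersetCard.1 hT').2
  have h2 : ∑ T' ∈ powersetCard T.card (univ : Finset α),
      (univ.filter (fun σ : Equiv.Perm α => ∀ t ∈ T', σ t ∈ S)).card =
      ∑ σ : Equiv.Perm α, ((powersetCard T.card (univ : Finset α)).filter
        (fun T' => ∀ t ∈ T', σ t ∈ S)).card :=
    Finset.sum_card_bipartiteAbove_eq_sum_card_bipartiteBelow
      (fun T' (σ : Equiv.Perm α) => ∀ t ∈ T', σ t ∈ S)
  have h3 : ∀ σ : Equiv.Perm α, ((powersetCard T.card (univ : Finset α)).filter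
        (fun T' => ∀ t ∈ T', σ t ∈ S)).card = S.card.choose T.card := by
    intro σ
    have : (powersetCard T.card (univ : Finset α)).filter (fun T' => ∀ t ∈ T', σ t ∈ S) =
        powersetCard T.card (S.map σ.symm.toEmbedding) := by
      ext T'
      simp only [mem_filter, mem_powersetCard, subset_iff, mem_map_equiv,
        Equiv.symm_symm, mem_univ, implies_true, true_and]
      tauto
    rw [this, card_powersetCard, card_map]
  rw [mul_comm, ← h1, h2, Finset.sum_congr rfl (fun σ _ => h3 σ), sum_const, card_univ,
    Fintype.card_perm, smul_eq_mul]

open Classical in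
lemma aux_lines (n : ℕ) (hn : 1 ≤ n) : ∀ L ∈ bingoLines n, L.Nonempty := by
  intro L hL
  simp only [bingoLines, mem_union, mem_image, mem_univ, true_and, mem_insert, mem_singleton] at hL
  rcases hL with (⟨i, rfl⟩ | ⟨i, rfl⟩) | rfl | rfl
  · exact ⟨(i, i), by simp [bingoRow]⟩
  · exact ⟨(i, i), by simp [bingoCol]⟩
  · exact ⟨(⟨0, hn⟩, ⟨0, hn⟩), by simp [bingoDiag]⟩
  · exact ⟨(⟨0, hn⟩, ⟨n - 1, by omega⟩), by simp [bingoAntiDiag]⟩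

open Classical in
lemma aux_F (n m : ℕ) (c : Fin n × Fin n → Fin (m * n)) (hc : Function.Injective c)
    (k : ℕ) (hk : k ≤ m * n) :
    ((univ.filter (fun σ : Equiv.Perm (Fin (m * n)) => BingoWins n m c σ k)).card : ℝ) /
      (Nat.factorial (m * n)) =
      ∑ X ∈ (bingoLines n).powerset.filter (fun X => X.Nonempty),
        (-1 : ℝ) ^ (X.card + 1) * (Nat.choose k ((X.sup id).card) : ℝ) /
            (Nat.choose (m * n) ((X.sup id).card) : ℝ) := by
  let A : Finset (Fin n × Fin n) → Finset (Equiv.Perm (Fin (m * n))) := fun L =>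
    univ.filter (fun σ => ∀ s ∈ L, ∃ t : Fin (m * n), (t : ℕ) < k ∧ σ t = c s)
  have h0 : univ.filter (fun σ : Equiv.Perm (Fin (m * n)) => BingoWins n m c σ k) =
      (bingoLines n).biUnion A := by
    ext σ
    simp [A, BingoWins]
  have hA : ∀ U : Finset (Fin n × Fin n), ((A U).card : ℝ) / (Nat.factorial (m * n)) =
      (Nat.choose k U.card : ℝ) / (Nat.choose (m * n) U.card : ℝ) := by
    intro U
    let S : Finset (Fin (m * n)) := univ.filter (fun t => (t : ℕ) < k)
    have hS : S.card = k := by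
      simp only [S]
      rw [Fin.card_filter_val_lt]
      omega
    have hcount := aux_count S (U.image c)
    rw [card_image_of_injective _ hc, hS, Fintype.card_fin] at hcount
    have hcard : (A U).card =
        (univ.filter (fun σ : Equiv.Perm (Fin (m * n)) => ∀ t ∈ U.image c, σ t ∈ S)).card := by
      refine Finset.card_bij' (fun σ _ => σ.symm) (fun σ _ => σ.symm) ?_ ?_ ?_ ?_
      · intro σ hσ
        simp only [A, S, mem_filter, mem_univ, true_and, mem_image] at hσ ⊢
        rintro _ ⟨s, hs, rfl⟩
        obtain ⟨t, ht, h⟩ := hσ s hs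
        rw [← h]; simpa using ht
      · intro σ hσ
        simp only [A, S, mem_filter, mem_univ, true_and, mem_image] at hσ ⊢
        intro s hs
        exact ⟨σ (c s), hσ _ ⟨s, hs, rfl⟩, by simp⟩
      · intro σ _; simp
      · intro σ _; simp
    replace hcount : (A U).card * (m * n).choose U.card =
        (m * n).factorial * k.choose U.card := by
      rw [hcard]
      convert hcount
    have hle : U.card ≤ m * n := by
      have := Finset.card_le_univ (U.image c)
      rwa [card_image_of_injective _ hc, Fintype.card_fin] at this
    have p1 : (Nat.choose (m * n) U.card : ℝ) ≠ 0 := by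
      exact_mod_cast (Nat.choose_pos hle).ne'
    have p2 : (Nat.factorial (m * n) : ℝ) ≠ 0 := by
      exact_mod_cast (Nat.factorial_pos _).ne'
    rw [div_eq_div_iff p2 p1]
    have : ((A U).card : ℝ) * (Nat.choose (m * n) U.card : ℝ) =
      (Nat.factorial (m * n) : ℝ) * (Nat.choose k U.card : ℝ) := by exact_mod_cast hcount
    rw [this, mul_comm]
  have hie := Finset.inclusion_exclusion_card_biUnion (bingoLines n) A
  have hieR : (((bingoLines n).biUnion A).card : ℝ) =
      ∑ X ∈ (bingoLines n).powerset.filter (fun X => X.Nonempty),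
        (-1 : ℝ) ^ (X.card + 1) * ((A (X.sup id)).card : ℝ) := by
    have h := congrArg (Int.cast : ℤ → ℝ) hie
    push_cast at h
    rw [h, ← Finset.sum_coe_sort ((bingoLines n).powerset.filter (fun X => X.Nonempty))]
    refine Finset.sum_congr rfl ?_
    intro X _
    congr 3
    ext σ
    simp only [mem_inf', A, mem_filter, mem_univ, true_and, mem_sup, id]
    constructor
    · rintro h s ⟨L, hL, hs⟩
      exact h L hL s hs
    · intro h L hL s hs
      exact h s ⟨L, hL, hs⟩
  rw [h0, hieR, Finset.sum_div]
  refine Finset.sum_congr rfl ?_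
  intro X _
  rw [mul_div_assoc, hA, mul_div_assoc]

/-- inclusion-exclusion formula for the PMF `P(B = k)` of the number of
calls needed to achieve Bingo on a single `(n,m)`-Bingo card. -/
theorem bingo_pmf (n m : ℕ) (hn : 1 ≤ n) (hm : n ≤ m)
    (c : Fin n × Fin n → Fin (m * n)) (hc : IsBingoCard n m c)
    (B : Equiv.Perm (Fin (m * n)) → ℕ)
    (hB : ∀ σ, IsLeast {k : ℕ | 1 ≤ k ∧ BingoWins n m c σ k} (B σ))
    (k : ℕ) (hk1 : 1 ≤ k) (hk : k ≤ m * n) :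
    (((Finset.univ : Finset (Equiv.Perm (Fin (m * n)))).filter
        (fun σ => B σ = k)).card : ℝ) / (Nat.factorial (m * n)) =
      ∑ X ∈ (bingoLines n).powerset.filter (fun X => X.Nonempty),
        (-1 : ℝ) ^ (X.card + 1) *
          (Nat.choose (k - 1) ((X.sup id).card - 1) : ℝ) /
            (Nat.choose (m * n) ((X.sup id).card) : ℝ) := by
  classical
  have hmono : ∀ (σ : Equiv.Perm (Fin (m * n))) (a b : ℕ), a ≤ b →
      BingoWins n m c σ a → BingoWins n m c σ b := by
    rintro σ a b hab ⟨L, hL, h⟩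
    refine ⟨L, hL, fun s hs => ?_⟩
    obtain ⟨t, ht, h'⟩ := h s hs
    exact ⟨t, by omega, h'⟩
  have hzero : ∀ σ : Equiv.Perm (Fin (m * n)), ¬ BingoWins n m c σ 0 := by
    rintro σ ⟨L, hL, h⟩
    obtain ⟨s, hs⟩ := aux_lines n hn L hL
    obtain ⟨t, ht, _⟩ := h s hs
    omega
  have hiff : ∀ σ : Equiv.Perm (Fin (m * n)), B σ = k ↔
      BingoWins n m c σ k ∧ ¬ BingoWins n m c σ (k - 1) := by
    intro σ
    obtain ⟨⟨h1, h2⟩, h3⟩ := hB σ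
    constructor
    · rintro rfl
      refine ⟨h2, fun h => ?_⟩
      by_cases hz : B σ - 1 = 0
      · rw [hz] at h; exact hzero σ h
      · have := h3 (show B σ - 1 ∈ _ from ⟨by omega, h⟩)
        omega
    · rintro ⟨h4, h5⟩
      have h6 : B σ ≤ k := h3 ⟨hk1, h4⟩
      by_contra hne
      exact h5 (hmono σ (B σ) (k - 1) (by omega) h2)
  have hset : univ.filter (fun σ : Equiv.Perm (Fin (m * n)) => B σ = k) =
      univ.filter (fun σ => BingoWins n m c σ k) \
        univ.filter (fun σ => BingoWins n m c σ (k - 1)) := by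
    ext σ
    simp [hiff]
  have hsub : univ.filter (fun σ : Equiv.Perm (Fin (m * n)) => BingoWins n m c σ (k - 1)) ⊆
      univ.filter (fun σ => BingoWins n m c σ k) := by
    intro σ
    simp only [mem_filter, mem_univ, true_and]
    exact hmono σ _ _ (by omega)
  have hcard : ((univ.filter (fun σ : Equiv.Perm (Fin (m * n)) => B σ = k)).card : ℝ) =
      ((univ.filter (fun σ : Equiv.Perm (Fin (m * n)) => BingoWins n m c σ k)).card : ℝ) -
      ((univ.filter (fun σ : Equiv.Perm (Fin (m * n)) => BingoWins n m c σ (k - 1))).card : ℝ) := by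
    rw [hset, Finset.cast_card_sdiff hsub]
  rw [hcard, sub_div, aux_F n m c hc.1 k hk, aux_F n m c hc.1 (k - 1) (by omega),
    ← Finset.sum_sub_distrib]
  refine Finset.sum_congr rfl ?_
  intro X hX
  simp only [mem_filter, mem_powerset] at hX
  obtain ⟨hX1, L, hL⟩ := hX
  obtain ⟨s, hs⟩ := aux_lines n hn L (hX1 hL)
  have hpos : 0 < (X.sup id).card := Finset.card_pos.2 ⟨s, mem_sup.2 ⟨L, hL, hs⟩⟩
  have hp : (Nat.choose k (X.sup id).card : ℝ) =
      (Nat.choose (k - 1) ((X.sup id).card - 1) : ℝ) + (Nat.choose (k - 1) (X.sup id).card : ℝ) := by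
    obtain ⟨a, rfl⟩ : ∃ a, k = a + 1 := ⟨k - 1, by omega⟩
    obtain ⟨b, hb⟩ : ∃ b, (X.sup id).card = b + 1 := ⟨(X.sup id).card - 1, by omega⟩
    rw [hb]
    simp [Nat.choose_succ_succ]
  rw [hp]
  ring
end

section
/- The expected number of calls to complete an (n,m)-Bingo card equals E[B] = (m·n + 1)·(1 − S_n), where S_n = Σ_{∅ ≠ X ⊆ 𝓛} (−1)^{|X|+1} / (m(X)+1). -/
open Finset

lemma bingo_count (N : ℕ) (A : Finset (Fin N)) (x : Fin N) (hx : x ∉ A) :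
    (A.card + 1) * (univ.filter (fun σ : Equiv.Perm (Fin N) =>
      ∀ a ∈ A, σ.symm a < σ.symm x)).card = Nat.factorial N := by
  classical
  set S := insert x A with hS
  let r : Fin N → Equiv.Perm (Fin N) → Prop :=
    fun y σ => ∀ a ∈ S, a ≠ y → σ.symm a < σ.symm y
  have h0 : (univ.filter (fun σ : Equiv.Perm (Fin N) =>
      ∀ a ∈ A, σ.symm a < σ.symm x)) = univ.filter (r x) := by
    ext σ
    simp only [mem_filter, mem_univ, true_and, r, hS, mem_insert]
    constructor
    · rintro h a (rfl | ha) hne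
      · exact absurd rfl hne
      · exact h a ha
    · intro h a ha
      exact h a (Or.inr ha) (fun e => hx (e ▸ ha))
  have h1 : ∀ y ∈ S, (univ.filter (r y)).card = (univ.filter (r x)).card := by
    intro y hy
    have hxS : x ∈ S := by simp [hS]
    have hsw : ∀ a ∈ S, Equiv.swap x y a ∈ S := by
      intro a ha
      rw [Equiv.swap_apply_def]
      split_ifs <;> assumption
    refine Finset.card_bij' (fun σ _ => σ.trans (Equiv.swap x y))
      (fun σ _ => σ.trans (Equiv.swap x y)) ?_ ?_ ?_ ?_
    · intro σ h
      simp only [mem_filter, mem_univ, true_and, r] at h ⊢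
      intro a ha hne
      simp only [Equiv.symm_trans_apply, Equiv.symm_swap, Equiv.swap_apply_left]
      refine h _ (hsw a ha) (fun e => hne ?_)
      have := congrArg (Equiv.swap x y) e
      simpa using this
    · intro σ h
      simp only [mem_filter, mem_univ, true_and, r] at h ⊢
      intro a ha hne
      simp only [Equiv.symm_trans_apply, Equiv.symm_swap, Equiv.swap_apply_right]
      refine h _ (hsw a ha) (fun e => hne ?_)
      have := congrArg (Equiv.swap x y) e
      simpa using this
    · intro σ _
      ext a
      simp
    · intro σ _
      ext a
      simp
  have h2 : ∀ σ : Equiv.Perm (Fin N), (S.filter (fun y => r y σ)).card = 1 := by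
    intro σ
    obtain ⟨y, hy, hmax⟩ := Finset.exists_max_image S (fun a => σ.symm a) ⟨x, by simp [hS]⟩
    rw [Finset.card_eq_one]
    refine ⟨y, ?_⟩
    ext z
    simp only [mem_filter, mem_singleton, r]
    constructor
    · rintro ⟨hz, h⟩
      by_contra hne
      exact absurd (h y hy (Ne.symm hne)) (not_lt.mpr (hmax z hz))
    · rintro rfl
      refine ⟨hy, fun a ha hne => lt_of_le_of_ne (hmax a ha) (fun e => hne (σ.symm.injective e))⟩
  have h3 := Finset.sum_card_bipartiteAbove_eq_sum_card_bipartiteBelow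
    (s := S) (t := (univ : Finset (Equiv.Perm (Fin N)))) r
  simp only [Finset.bipartiteAbove, Finset.bipartiteBelow] at h3
  rw [Finset.sum_congr rfl h1, Finset.sum_congr rfl (fun σ _ => h2 σ)] at h3
  simp only [sum_const, smul_eq_mul, mul_one, card_univ, Fintype.card_perm, Fintype.card_fin] at h3
  have hcard : S.card = A.card + 1 := card_insert_of_notMem hx
  rw [h0, ← h3, hcard]

lemma bingo_sum_alt {α : Type*} [DecidableEq α] (s : Finset α) :
    ∑ X ∈ s.powerset.filter (fun X => X.Nonempty), (-1 : ℝ) ^ (X.card + 1) =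
      if s.Nonempty then 1 else 0 := by
  have h := Finset.sum_powerset_neg_one_pow_card (x := s)
  have h' : ∑ X ∈ s.powerset, (-1 : ℝ) ^ X.card = if s = ∅ then 1 else 0 := by
    exact_mod_cast congrArg (Int.cast : ℤ → ℝ) h
  have he : s.powerset.filter (fun X => X.Nonempty) = s.powerset.erase ∅ := by
    ext X
    simp [Finset.nonempty_iff_ne_empty, and_comm]
  have h2 := Finset.add_sum_erase s.powerset (fun X => (-1 : ℝ) ^ X.card)
    (Finset.empty_mem_powerset s)
  rw [he]
  simp only [pow_succ, mul_neg, mul_one, sum_neg_distrib]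
  rw [h'] at h2
  by_cases hs : s = ∅
  · simp [hs] at h2 ⊢
  · simp only [hs, Finset.nonempty_iff_ne_empty, card_empty, pow_zero, if_false, ne_eq,
      not_false_eq_true, if_true] at h2 ⊢
    linarith

lemma bingo_incl_excl {α : Type*} [DecidableEq α] (s : Finset α) (P : α → Prop)
    [DecidablePred P] :
    (if ∃ L ∈ s, P L then (1 : ℝ) else 0) =
    ∑ X ∈ s.powerset.filter (fun X => X.Nonempty), (-1 : ℝ) ^ (X.card + 1) *
      (if ∀ L ∈ X, P L then 1 else 0) := by
  have h := bingo_sum_alt (s.filter P)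
  simp only [mul_ite, mul_one, mul_zero]
  rw [← Finset.sum_filter]
  have e : ((s.powerset.filter (fun X => X.Nonempty)).filter (fun X => ∀ L ∈ X, P L)) =
      (s.filter P).powerset.filter (fun X => X.Nonempty) := by
    ext X
    simp only [mem_filter, mem_powerset, Finset.subset_iff]
    constructor
    · rintro ⟨⟨a, b⟩, d⟩
      exact ⟨fun y hy => ⟨a hy, d _ hy⟩, b⟩
    · rintro ⟨a, b⟩
      exact ⟨⟨fun y hy => (a hy).1, b⟩, fun y hy => (a hy).2⟩
  rw [e, h]
  simp [Finset.Nonempty]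

lemma bingo_lines_nonempty (n : ℕ) (hn : 1 ≤ n) (L : Finset (Fin n × Fin n))
    (hL : L ∈ bingoLines n) : L.Nonempty := by
  simp only [bingoLines, mem_union, mem_image, mem_univ, true_and, mem_insert,
    mem_singleton] at hL
  rcases hL with (⟨i, rfl⟩ | ⟨i, rfl⟩) | rfl | rfl
  · exact ⟨(i, i), by simp [bingoRow]⟩
  · exact ⟨(i, i), by simp [bingoCol]⟩
  · exact ⟨(⟨0, hn⟩, ⟨0, hn⟩), by simp [bingoDiag]⟩
  · exact ⟨(⟨0, hn⟩, ⟨n - 1, by omega⟩), by simp [bingoAntiDiag]⟩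

lemma bingo_sum_A (N : ℕ) (A : Finset (Fin N)) :
    ∑ x : Fin N, ∑ σ : Equiv.Perm (Fin N),
      (if ∀ a ∈ A, σ.symm a < σ.symm x then (1 : ℝ) else 0) =
    (Nat.factorial N : ℝ) * (((N : ℝ) + 1) / ((A.card : ℝ) + 1) - 1) := by
  have hpos : (A.card : ℝ) + 1 ≠ 0 := by positivity
  have h : ∀ x : Fin N, ∑ σ : Equiv.Perm (Fin N),
      (if ∀ a ∈ A, σ.symm a < σ.symm x then (1 : ℝ) else 0) =
      if x ∈ Aᶜ then (Nat.factorial N : ℝ) / ((A.card : ℝ) + 1) else 0 := by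
    intro x
    rw [Finset.sum_boole]
    by_cases hx : x ∈ A
    · rw [if_neg (by simpa using hx), Finset.filter_eq_empty_iff.mpr]
      · simp
      · intro σ _ h
        exact lt_irrefl _ (h x hx)
    · rw [if_pos (by simpa using hx), ← bingo_count N A x hx]
      push_cast
      field_simp
  rw [Finset.sum_congr rfl (fun x _ => h x), Finset.sum_ite_mem, univ_inter, sum_const,
    card_compl, Fintype.card_fin, nsmul_eq_mul, Nat.cast_sub (by simpa using card_le_univ A)]
  field_simp
  ring

lemma bingo_B (n m : ℕ) (hn : 1 ≤ n) 
    (c : Fin n × Fin n → Fin (m * n)) (σ : Equiv.Perm (Fin (m * n))) (b : ℕ)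
    (hb : IsLeast {k : ℕ | 1 ≤ k ∧ BingoWins n m c σ k} b) :
    (b : ℝ) = ((m * n : ℕ) : ℝ) - ∑ x : Fin (m * n),
      (if ∃ L ∈ bingoLines n, ∀ s ∈ L, σ.symm (c s) < σ.symm x then (1 : ℝ) else 0) := by
  have hne := bingo_lines_nonempty n hn
  obtain ⟨⟨hb1, L0, hL0, hw⟩, hmin⟩ := hb
  have hbN : b ≤ m * n := by
    refine hmin ⟨?_, L0, hL0, fun s _ => ⟨σ.symm (c s), (σ.symm (c s)).2, by simp⟩⟩
    have := (c (⟨0, hn⟩, ⟨0, hn⟩)).2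
    omega
  have key : ∀ t : Fin (m * n), (∃ L ∈ bingoLines n, ∀ s ∈ L, σ.symm (c s) < t) ↔ b ≤ (t : ℕ) := by
    intro t
    constructor
    · rintro ⟨L, hL, h⟩
      refine hmin ⟨?_, L, hL, fun s hs => ⟨σ.symm (c s), h s hs, by simp⟩⟩
      obtain ⟨s, hs⟩ := hne L hL
      have : ((σ.symm (c s) : Fin (m * n)) : ℕ) < t := h s hs
      omega
    · intro h
      refine ⟨L0, hL0, fun s hs => ?_⟩
      obtain ⟨u, hu, e⟩ := hw s hs
      rw [← e, Equiv.symm_apply_apply, Fin.lt_def]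
      omega
  simp only [key]
  rw [Equiv.sum_comp σ.symm (fun t : Fin (m * n) => if b ≤ (t : ℕ) then (1 : ℝ) else 0),
    Fin.sum_univ_eq_sum_range (fun t : ℕ => if b ≤ t then (1 : ℝ) else 0), Finset.sum_boole]
  have : (range (m * n)).filter (fun t => b ≤ t) = Ico b (m * n) := by
    ext t
    simp [and_comm]
  rw [this, Nat.card_Ico, Nat.cast_sub hbN]
  ring

/-- the expected number of calls to complete an `(n,m)`-Bingo card is
`(m·n + 1)·(1 - S_n)`. -/
theorem bingo_expectation (n m : ℕ) (hn : 1 ≤ n) (hm : n ≤ m)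
    (c : Fin n × Fin n → Fin (m * n)) (hc : IsBingoCard n m c)
    (B : Equiv.Perm (Fin (m * n)) → ℕ)
    (hB : ∀ σ, IsLeast {k : ℕ | 1 ≤ k ∧ BingoWins n m c σ k} (B σ)) :
    (∑ σ : Equiv.Perm (Fin (m * n)), (B σ : ℝ)) / (Nat.factorial (m * n)) =
      ((m * n : ℕ) + 1) * (1 - Sn n) := by
  classical
  have hfac : (Nat.factorial (m * n) : ℝ) ≠ 0 := by positivity
  have hLne : (bingoLines n).Nonempty := ⟨bingoDiag n, by simp [bingoLines]⟩
  have halt := bingo_sum_alt (bingoLines n)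
  rw [if_pos hLne] at halt
  have hBs : ∀ σ, (B σ : ℝ) = ((m * n : ℕ) : ℝ) - ∑ x : Fin (m * n),
      ∑ X ∈ (bingoLines n).powerset.filter (fun X => X.Nonempty), (-1 : ℝ) ^ (X.card + 1) *
      (if ∀ a ∈ (X.sup id).image c, σ.symm a < σ.symm x then 1 else 0) := by
    intro σ
    rw [bingo_B n m hn c σ (B σ) (hB σ)]
    congr 1
    refine Finset.sum_congr rfl fun x _ => ?_
    have hie := bingo_incl_excl (bingoLines n) (fun L => ∀ s ∈ L, σ.symm (c s) < σ.symm x)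
    refine Eq.trans ?_ (hie.trans ?_)
    · congr
    refine Finset.sum_congr rfl fun X _ => ?_
    have hiff : (∀ L ∈ X, ∀ s ∈ L, σ.symm (c s) < σ.symm x) ↔
        (∀ a ∈ (X.sup id).image c, σ.symm a < σ.symm x) := by
      simp only [mem_image, Finset.mem_sup, id]
      constructor
      · rintro h a ⟨s, ⟨L, hL, hs⟩, rfl⟩
        exact h L hL s hs
      · intro h L hL s hs
        exact h _ ⟨s, ⟨L, hL, hs⟩, rfl⟩
    by_cases h : ∀ L ∈ X, ∀ s ∈ L, σ.symm (c s) < σ.symm x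
    · rw [if_pos h, if_pos (hiff.1 h)]
    · rw [if_neg h, if_neg (fun h' => h (hiff.2 h'))]
  have hsum : ∑ σ : Equiv.Perm (Fin (m * n)), ∑ x : Fin (m * n),
      ∑ X ∈ (bingoLines n).powerset.filter (fun X => X.Nonempty), (-1 : ℝ) ^ (X.card + 1) *
      (if ∀ a ∈ (X.sup id).image c, σ.symm a < σ.symm x then (1 : ℝ) else 0) =
      (Nat.factorial (m * n) : ℝ) * ((((m * n : ℕ) : ℝ) + 1) * Sn n - 1) := by
    rw [Finset.sum_comm]
    have : ∀ x : Fin (m * n), ∑ σ : Equiv.Perm (Fin (m * n)),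
      ∑ X ∈ (bingoLines n).powerset.filter (fun X => X.Nonempty), (-1 : ℝ) ^ (X.card + 1) *
      (if ∀ a ∈ (X.sup id).image c, σ.symm a < σ.symm x then (1 : ℝ) else 0) =
      ∑ X ∈ (bingoLines n).powerset.filter (fun X => X.Nonempty),
      ∑ σ : Equiv.Perm (Fin (m * n)), (-1 : ℝ) ^ (X.card + 1) *
      (if ∀ a ∈ (X.sup id).image c, σ.symm a < σ.symm x then (1 : ℝ) else 0) :=
      fun x => Finset.sum_comm
    rw [Finset.sum_congr rfl (fun x _ => this x), Finset.sum_comm]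
    simp only [← Finset.mul_sum]
    simp only [bingo_sum_A, Finset.card_image_of_injective _ hc.1]
    have e : (Nat.factorial (m * n) : ℝ) * ((((m * n : ℕ) : ℝ) + 1) * Sn n - 1) =
        (Nat.factorial (m * n) : ℝ) * ((((m * n : ℕ) : ℝ) + 1) * Sn n -
          ∑ X ∈ (bingoLines n).powerset.filter (fun X => X.Nonempty), (-1 : ℝ) ^ (X.card + 1)) := by
      rw [halt]
    rw [e, Sn, Finset.mul_sum, ← Finset.sum_sub_distrib, Finset.mul_sum]
    refine Finset.sum_congr rfl fun X _ => ?_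
    ring
  rw [Finset.sum_congr rfl (fun σ _ => hBs σ), Finset.sum_sub_distrib, hsum, sum_const, card_univ,
    Fintype.card_perm, Fintype.card_fin, nsmul_eq_mul]
  field_simp
  ring
end

section
/- Let M ≥ 1 and let 𝓐 be a nonempty finite family of nonempty subsets of Fin M (a general family of winning patterns, covering variants such as Four Corners Bingo). Let σ be a uniformly random permutation of Fin M and let B(σ) be the least k ∈ {1,…,M} such that some A ∈ 𝓐 is entirely contained among the first k calls σ(0),…,σ(k−1). Then the expected value of B equals (M + 1)·(1 − S), where S = Σ_{∅ ≠ Y ⊆ 𝓐} (−1)^{|Y|+1} / (m(Y)+1) and m(Y) denotes the cardinality of the union of the sets in Y. -/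
open Finset

lemma gpe_symm (M k : ℕ) (U V : Finset (Fin M)) (h : #U = #V) :
    #{σ : Equiv.Perm (Fin M) | ∀ x ∈ U, (σ.symm x : ℕ) < k} =
      #{σ : Equiv.Perm (Fin M) | ∀ x ∈ V, (σ.symm x : ℕ) < k} := by
  classical
  let e : {x // x ∈ U} ≃ {x // x ∈ V} := Finset.equivOfCardEq h
  let τ : Equiv.Perm (Fin M) := e.extendSubtype
  have hτ : ∀ x, x ∈ U ↔ τ x ∈ V := by
    intro x
    constructor
    · intro hx
      exact e.extendSubtype_mem x hx
    · intro hx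
      by_contra h'
      exact e.extendSubtype_not_mem x h' hx
  apply Finset.card_bij (fun σ _ => σ.trans τ)
  · intro σ hσ
    simp only [mem_filter, mem_univ, true_and] at hσ ⊢
    intro x hx
    simp only [Equiv.symm_trans_apply]
    apply hσ
    rw [hτ]
    simpa using hx
  · intro a _ b _ hab
    ext x : 1
    have := congrArg (fun f => f x) hab
    simpa using this
  · intro σ hσ
    simp only [mem_filter, mem_univ, true_and] at hσ
    refine ⟨σ.trans τ.symm, ?_, ?_⟩
    · simp only [mem_filter, mem_univ, true_and]
      intro x hx
      simpa using hσ _ ((hτ x).1 hx)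
    · ext x : 1
      simp

lemma gpe_count (M k : ℕ) (hk : k ≤ M) (U : Finset (Fin M)) :
    #{σ : Equiv.Perm (Fin M) | ∀ x ∈ U, (σ.symm x : ℕ) < k} * M.choose #U =
      M.factorial * k.choose #U := by
  classical
  have h1 : ∑ V ∈ powersetCard #U (univ : Finset (Fin M)),
      #{σ : Equiv.Perm (Fin M) | ∀ x ∈ V, (σ.symm x : ℕ) < k} =
      #{σ : Equiv.Perm (Fin M) | ∀ x ∈ U, (σ.symm x : ℕ) < k} * M.choose #U := by
    rw [Finset.sum_congr rfl (fun V hV => gpe_symm M k V U (mem_powersetCard.1 hV).2)]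
    simp [mul_comm]
  rw [← h1]
  have h2 := Finset.sum_card_bipartiteAbove_eq_sum_card_bipartiteBelow
    (s := powersetCard #U (univ : Finset (Fin M))) (t := (univ : Finset (Equiv.Perm (Fin M))))
    (fun V σ => ∀ x ∈ V, (σ.symm x : ℕ) < k)
  unfold bipartiteAbove bipartiteBelow at h2
  rw [h2]
  have h3 : ∀ σ : Equiv.Perm (Fin M),
      #{V ∈ powersetCard #U (univ : Finset (Fin M)) | ∀ x ∈ V, (σ.symm x : ℕ) < k} =
        k.choose #U := by
    intro σ
    have : ({V ∈ powersetCard #U (univ : Finset (Fin M)) | ∀ x ∈ V, (σ.symm x : ℕ) < k}) =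
        powersetCard #U ({x | (σ.symm x : ℕ) < k} : Finset (Fin M)) := by
      ext V
      simp only [mem_filter, mem_powersetCard, subset_iff, mem_univ, true_and]
      tauto
    rw [this, card_powersetCard]
    congr 1
    have h4 : #({x | (σ.symm x : ℕ) < k} : Finset (Fin M)) =
        #({t | (t : ℕ) < k} : Finset (Fin M)) := by
      apply Finset.card_equiv σ.symm
      simp
    rw [h4, Fin.card_filter_val_lt]
    omega
  simp [h3, Fintype.card_perm]

lemma gpe_sum (M : ℕ) (U : Finset (Fin M)) :
    (∑ k ∈ range (M + 1), #{σ : Equiv.Perm (Fin M) | ∀ x ∈ U, (σ.symm x : ℕ) < k}) * (#U + 1) =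
      M.factorial * (M + 1) := by
  have hU : #U ≤ M := by simpa using card_le_univ U
  have hpos : 0 < M.choose #U := Nat.choose_pos hU
  apply Nat.eq_of_mul_eq_mul_right hpos
  have h1 : (∑ k ∈ range (M + 1),
      #{σ : Equiv.Perm (Fin M) | ∀ x ∈ U, (σ.symm x : ℕ) < k}) * M.choose #U =
      M.factorial * (M + 1).choose (#U + 1) := by
    rw [Finset.sum_mul, Finset.sum_congr rfl
      (fun k hk => gpe_count M k (by simp at hk; omega) U), ← Finset.mul_sum,
      ← Nat.sum_Icc_choose]
    congr 1
    symm
    apply Finset.sum_subset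
    · intro x hx; simp only [mem_Icc, mem_range] at *; omega
    · intro x _ hx
      apply Nat.choose_eq_zero_of_lt
      simp only [mem_Icc, mem_range] at *; omega
  have h2 := Nat.add_one_mul_choose_eq M #U
  calc _ = _ * M.choose #U * (#U + 1) := by ring
    _ = _ := by rw [h1, mul_assoc, ← h2]; ring


open Finset

/-- for a general nonempty family `𝓐` of nonempty winning patterns in
`Fin M`, the expected number of calls of a uniformly random permutation until some
pattern is completed equals `(M + 1)·(1 - S)`, where
`S = ∑_{∅ ≠ Y ⊆ 𝓐} (-1)^{|Y|+1} / (m(Y)+1)` and `m(Y) = |⋃_{A ∈ Y} A|`. -/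
theorem general_pattern_expectation (M : ℕ) (hM : 1 ≤ M)
    (𝓐 : Finset (Finset (Fin M))) (h𝓐 : 𝓐.Nonempty) (hA : ∀ A ∈ 𝓐, A.Nonempty)
    (B : Equiv.Perm (Fin M) → ℕ)
    (hB : ∀ σ, IsLeast
      {k : ℕ | 1 ≤ k ∧ ∃ A ∈ 𝓐, ∀ x ∈ A, ∃ t : Fin M, (t : ℕ) < k ∧ σ t = x} (B σ)) :
    (∑ σ : Equiv.Perm (Fin M), (B σ : ℝ)) / (Nat.factorial M) =
      ((M : ℝ) + 1) *
        (1 - ∑ Y ∈ 𝓐.powerset.filter (fun Y => Y.Nonempty),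
          (-1 : ℝ) ^ (Y.card + 1) / (((Y.sup id).card : ℝ) + 1)) := by
  classical
  have hkey : ∀ σ : Equiv.Perm (Fin M), ∀ k : ℕ, (if B σ ≤ k then (1 : ℝ) else 0) =
      ∑ Y ∈ 𝓐.powerset.filter (fun Y => Y.Nonempty),
        (-1 : ℝ) ^ (Y.card + 1) * (if ∀ x ∈ Y.sup id, (σ.symm x : ℕ) < k then 1 else 0) := by
    intro σ k
    have h := Finset.indicator_biUnion_eq_sum_powerset 𝓐
      (fun A => {k : ℕ | ∀ x ∈ A, (σ.symm x : ℕ) < k}) (fun _ => (1 : ℝ)) k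
    have hle : B σ ≤ k ↔ k ∈ ⋃ A ∈ 𝓐, {k : ℕ | ∀ x ∈ A, (σ.symm x : ℕ) < k} := by
      simp only [Set.mem_iUnion, Set.mem_setOf_eq, exists_prop]
      constructor
      · intro hk
        obtain ⟨_, A, hA1, hA2⟩ := (hB σ).1
        refine ⟨A, hA1, fun x hx => ?_⟩
        obtain ⟨t, ht, rfl⟩ := hA2 x hx
        simp; omega
      · rintro ⟨A, hA1, hA2⟩
        apply (hB σ).2
        refine ⟨?_, A, hA1, fun x hx => ⟨σ.symm x, hA2 x hx, by simp⟩⟩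
        obtain ⟨x, hx⟩ := hA A hA1
        have := hA2 x hx
        omega
    rw [Set.indicator_apply] at h
    simp only [← hle] at h
    rw [h]
    apply Finset.sum_congr rfl
    intro Y _
    have hiff : (k ∈ ⋂ A ∈ Y, {k : ℕ | ∀ x ∈ A, (σ.symm x : ℕ) < k}) ↔
        ∀ x ∈ Y.sup id, (σ.symm x : ℕ) < k := by
      simp only [Set.mem_iInter, Set.mem_setOf_eq, Finset.mem_sup, id]
      constructor
      · rintro h x ⟨A, hA, hx⟩
        exact h A hA x hx
      · intro h A hA x hx
        exact h x ⟨A, hA, hx⟩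
    rw [Set.indicator_apply]
    simp only [hiff, zsmul_eq_mul]
    push_cast
    rfl
  have hBM : ∀ σ, B σ ≤ M := by
    intro σ
    apply (hB σ).2
    obtain ⟨A, hA1⟩ := h𝓐
    exact ⟨hM, A, hA1, fun x _ => ⟨σ.symm x, (σ.symm x).2, by simp⟩⟩
  have hsum : ∀ σ, ∑ k ∈ range (M + 1), (if B σ ≤ k then (1 : ℝ) else 0) = M + 1 - B σ := by
    intro σ
    have : (range (M + 1)).filter (fun k => B σ ≤ k) = Ico (B σ) (M + 1) := by
      ext k; simp; omega
    rw [← Finset.sum_filter, this]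
    have := hBM σ
    simp only [sum_const, Nat.card_Ico, nsmul_eq_mul, mul_one]
    rw [Nat.cast_sub (by omega)]
    push_cast
    ring
  have hf : (M.factorial : ℝ) ≠ 0 := by positivity
  have hE : ∑ σ : Equiv.Perm (Fin M), ((M : ℝ) + 1 - B σ) =
      M.factorial * (M + 1) * ∑ Y ∈ 𝓐.powerset.filter (fun Y => Y.Nonempty),
          (-1 : ℝ) ^ (Y.card + 1) / (((Y.sup id).card : ℝ) + 1) := by
    simp_rw [← hsum, hkey]
    rw [Finset.sum_comm]
    rw [Finset.sum_congr rfl (fun k _ => Finset.sum_comm)]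
    rw [Finset.sum_comm, Finset.mul_sum]
    apply Finset.sum_congr rfl
    intro Y _
    simp_rw [← Finset.mul_sum]
    have h := congrArg (Nat.cast : ℕ → ℝ) (gpe_sum M (Y.sup id))
    push_cast at h
    simp_rw [Finset.sum_boole]
    rw [mul_div_assoc', eq_div_iff (by positivity), mul_assoc, h]
    ring
  rw [Finset.sum_sub_distrib] at hE
  simp only [sum_const, card_univ, Fintype.card_perm, Fintype.card_fin, nsmul_eq_mul] at hE
  rw [div_eq_iff hf]
  linear_combination -hE
end
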